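/- Let char(K) ≠ 2 and ζ_4 ∉ K, and let s be the largest element of ℤ ∪ {∞} such that ζ_{2^s} ∈ K(ζ_{2𝒫}). Then K(ζ_{2𝒫}) ∩ √[2^∞]{K^×} ⊆ ⟨ζ_{2^{s+1}}, √{K^×}⟩ and K(ζ_{2𝒫}) ∩ K(√[2^∞]{K^×}) ⊆ K(ζ_{2^{s+1}}, √{K^×}). -/

import Mathlib

noncomputable section

open IntermediateField

/-- `K^×` viewed as a subgroup of the units of the algebraic closure of `K`. -/
def baseUnits (K : Type*) [Field K] : Subgroup (AlgebraicClosure K)ˣ :=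
  (Units.map (algebraMap K (AlgebraicClosure K)).toMonoidHom).range

/-- The subgroup of `(AlgebraicClosure K)ˣ` of elements whose `m`-th power lies in `K^×`. -/
def radGroup (K : Type*) [Field K] (m : ℕ) : Subgroup (AlgebraicClosure K)ˣ where
  carrier := {x | ∃ y : K, algebraMap K (AlgebraicClosure K) y = (x : AlgebraicClosure K) ^ m}
  one_mem' := ⟨1, by simp⟩
  mul_mem' := by
    rintro a b ⟨y, hy⟩ ⟨z, hz⟩
    exact ⟨y * z, by rw [map_mul, hy, hz, Units.val_mul, mul_pow]⟩
  inv_mem' := by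
    rintro a ⟨y, hy⟩
    refine ⟨y⁻¹, ?_⟩
    rw [map_inv₀, hy, Units.val_inv_eq_inv_val, inv_pow]

lemma radGroup_le (K : Type*) [Field K] {m k : ℕ} :
    radGroup K m ≤ radGroup K (m * k) := by
  rintro x ⟨y, hy⟩
  exact ⟨y ^ k, by rw [map_pow, hy, ← pow_mul]⟩

/-- The group `√[ℓ^∞]{K^×}` of radicals of `ℓ`-power order over `K`. -/
def radInf (K : Type*) [Field K] (ℓ : ℕ) : Subgroup (AlgebraicClosure K)ˣ where
  carrier := {x | ∃ n : ℕ, x ∈ radGroup K (ℓ ^ n)}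
  one_mem' := ⟨0, one_mem _⟩
  mul_mem' := by
    rintro a b ⟨n, ha⟩ ⟨m, hb⟩
    refine ⟨n + m, mul_mem ?_ ?_⟩
    · have h : radGroup K (ℓ ^ n) ≤ radGroup K (ℓ ^ (n + m)) := by
        rw [pow_add]; exact radGroup_le K
      exact h ha
    · have h : radGroup K (ℓ ^ m) ≤ radGroup K (ℓ ^ (n + m)) := by
        rw [add_comm, pow_add]; exact radGroup_le K
      exact h hb
  inv_mem' := by
    rintro a ⟨n, ha⟩
    exact ⟨n, inv_mem ha⟩

/-- The units of the algebraic closure lying in an intermediate field `F`, as a subgroup. -/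
def unitsIn {K : Type*} [Field K] (F : IntermediateField K (AlgebraicClosure K)) :
    Subgroup (AlgebraicClosure K)ˣ where
  carrier := {x | (x : AlgebraicClosure K) ∈ F}
  one_mem' := by
    show ((1 : (AlgebraicClosure K)ˣ) : AlgebraicClosure K) ∈ F
    simpa using one_mem F
  mul_mem' := by
    intro a b ha hb
    show ((a * b : (AlgebraicClosure K)ˣ) : AlgebraicClosure K) ∈ F
    rw [Units.val_mul]
    exact mul_mem ha hb
  inv_mem' := by
    intro x hx
    show ((x⁻¹ : (AlgebraicClosure K)ˣ) : AlgebraicClosure K) ∈ F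
    rw [Units.val_inv_eq_inv_val]
    exact inv_mem hx

/-- `K(ζ_{2𝒫})`: the extension of `K` generated by all roots of unity whose order is `4` or
an odd prime, and not divisible by the characteristic of `K`. -/
def cyclo2P (K : Type*) [Field K] : IntermediateField K (AlgebraicClosure K) :=
  IntermediateField.adjoin K
    {x : AlgebraicClosure K |
      ∃ n : ℕ, (n = 4 ∨ (n.Prime ∧ Odd n)) ∧ ¬ (ringChar K ∣ n) ∧ IsPrimitiveRoot x n}

/-- The set of roots of unity of order exactly `n` in the algebraic closure of `K`. -/
def primRoots (K : Type*) [Field K] (n : ℕ) : Set (AlgebraicClosure K) :=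
  {x | IsPrimitiveRoot x n}

/-- The set of roots of unity of order `ℓ^n` for `n ≤ t` (all of them if `t = ∞`). -/
def pPowRoots (K : Type*) [Field K] (ℓ : ℕ) (t : ℕ∞) : Set (AlgebraicClosure K) :=
  {x | ∃ n : ℕ, (n : ℕ∞) ≤ t ∧ IsPrimitiveRoot x (ℓ ^ n)}

/-- The set of units that are roots of unity of order `ℓ^n` for `n ≤ t`. -/
def pPowRootsUnits (K : Type*) [Field K] (ℓ : ℕ) (t : ℕ∞) : Set (AlgebraicClosure K)ˣ :=
  {x | ∃ n : ℕ, (n : ℕ∞) ≤ t ∧ IsPrimitiveRoot (x : AlgebraicClosure K) (ℓ ^ n)}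

/-!
Write `L = K(ζ_{2𝒫})`; only two properties of `L` matter: it is fixed by all commutators of the
Galois group, and it contains the fourth roots of unity.

*Radicals in an abelian extension* (Schinzel's argument). Since `ζ₄ ∉ K`, some automorphism `τ` acts
on the relevant roots of unity by `η ↦ η ^ t` with `t ≡ 3 mod 4`. If `x` is a radical of `2`-power
order fixed by commutators, then `x ^ t / τ x` is Galois invariant, and `τ x = z x` with `z` of
`2`-power order, so `x ^ (t - 1) ∈ z K^×`. As `t - 1` is twice an odd number, `x` is a root of unity
of `2`-power order times a square root of an element of `K^×`.

*From radicals to fields.* Every radical is an eigenvector of each commutator, with a root of unity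
as eigenvalue. When an element of `L ∩ K(√[2^∞]{K^×})` is expanded in a basis of radicals over
`K(μ_{2^∞})`, only radicals fixed by all commutators occur, so it lies in `K(μ_{2^∞}, √{K^×})`.

*Descent in the cyclotomic tower.* Let `ζ` have order `2^(s+1)` and let `σ` fix `L` with `σ ζ = -ζ`.
If `w ^ 2 ^ d = ζ` with `d ≥ 1`, then `σ ^ 2 ^ d` still fixes `L`, fixes `√{K^×}` and `w ^ 2`, and
negates `w`; hence `L ∩ K(w, √{K^×}) ⊆ K(w ^ 2, √{K^×})`.
-/

section GaloisGeneralities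

variable {K Ω : Type*} [Field K] [Field Ω] [Algebra K Ω]

lemma mem_of_forall_mem_fixingSubgroup [Normal K Ω] {F : IntermediateField K Ω} {y : Ω}
    (hsep : IsSeparable K y) (hfix : ∀ g ∈ F.fixingSubgroup, g y = y) : y ∈ F := by
  have : Normal F Ω := Normal.tower_top_of_normal K F Ω
  by_contra hy
  have hbot : y ∉ (⊥ : Subalgebra F Ω) := by
    rintro ⟨a, rfl⟩
    exact hy a.2
  obtain ⟨z, hne, hconj⟩ :=
    (notMem_iff_exists_ne_and_isConjRoot (hsep.tower_top F) (Normal.splits ‹_› y)).1 hbot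
  obtain ⟨g, hg⟩ := hconj.exists_algEquiv
  have hgfix : g.restrictScalars K ∈ F.fixingSubgroup :=
    (F.mem_fixingSubgroup_iff _).2 fun x hx => g.commutes ⟨x, hx⟩
  exact hne (by simpa [← hg] using hfix _ hgfix)

lemma isSeparable_of_pow_eq_algebraMap {n : ℕ} (hn : (n : K) ≠ 0) {x : Ω} (hx : x ≠ 0) {a : K}
    (ha : x ^ n = algebraMap K Ω a) : IsSeparable K x := by
  have ha0 : a ≠ 0 := by
    rintro rfl
    exact pow_ne_zero n hx (ha.trans (map_zero _))
  refine (Polynomial.separable_X_pow_sub_C a hn ha0).of_dvd (minpoly.dvd _ _ ?_)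
  simp [ha]

lemma exists_mem_fixingSubgroup_apply_eq_neg [Normal K Ω] {L : IntermediateField K Ω} {ζ : Ω}
    (hsep : IsSeparable K ζ) (hζ : ζ ∉ L) (hζ2 : ζ ^ 2 ∈ L) :
    ∃ σ ∈ L.fixingSubgroup, σ ζ = -ζ := by
  by_contra! hne
  refine hζ (mem_of_forall_mem_fixingSubgroup hsep fun g hg => ?_)
  have hsq : g ζ ^ 2 = ζ ^ 2 := by
    rw [← map_pow, (L.mem_fixingSubgroup_iff g).1 hg _ hζ2]
  exact (sq_eq_sq_iff_eq_or_eq_neg.1 hsq).resolve_right (hne g hg)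

lemma exists_forall_apply_eq_pow (g : Gal(Ω/K)) {n : ℕ} (hn : n ≠ 0) :
    ∃ t : ℕ, ∀ η : Ω, η ^ n = 1 → g η = η ^ t := by
  have : NeZero n := ⟨hn⟩
  refine ⟨(modularCyclotomicCharacter.toFun n g.toRingEquiv).val, fun η hη => ?_⟩
  exact modularCyclotomicCharacter.toFun_spec g.toRingEquiv (rootsOfUnity.mkOfPowEq η hη)

end GaloisGeneralities

section AbelianPart

variable (K Ω : Type*) [Field K] [Field Ω] [Algebra K Ω]

/-- The subextension of `Ω / K` fixed by all commutators of automorphisms. If `Ω / K` is Galois, it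
is the maximal abelian subextension. -/
def abelianPart : IntermediateField K Ω :=
  fixedField (commutator Gal(Ω/K))

variable {K Ω}

lemma mem_abelianPart_iff {y : Ω} :
    y ∈ abelianPart K Ω ↔ ∀ g h : Gal(Ω/K), g (h y) = h (g y) := by
  have hfix (g h : Gal(Ω/K)) :
      g * h * g⁻¹ * h⁻¹ ∈ MulAction.stabilizer Gal(Ω/K) y ↔ g⁻¹ (h⁻¹ y) = h⁻¹ (g⁻¹ y) := by
    rw [MulAction.mem_stabilizer_iff, mul_assoc, mul_smul, smul_eq_iff_eq_inv_smul, mul_inv_rev]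
    rfl
  calc y ∈ abelianPart K Ω
    _ ↔ commutator Gal(Ω/K) ≤ MulAction.stabilizer Gal(Ω/K) y := mem_fixedField_iff _ _
    _ ↔ ∀ g h : Gal(Ω/K), g⁻¹ (h⁻¹ y) = h⁻¹ (g⁻¹ y) := by
      simp only [commutator_def, Subgroup.commutator_le, Subgroup.mem_top, true_imp_iff,
        commutatorElement_def, hfix]
    _ ↔ ∀ g h : Gal(Ω/K), g (h y) = h (g y) :=
      ⟨fun hy g h => by simpa only [inv_inv] using hy g⁻¹ h⁻¹, fun hy _ _ => hy _ _⟩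

lemma mem_abelianPart_of_pow_eq_one {x : Ω} {n : ℕ} (hn : n ≠ 0) (hx : x ^ n = 1) :
    x ∈ abelianPart K Ω := by
  refine mem_abelianPart_iff.2 fun g h => ?_
  obtain ⟨a, ha⟩ := exists_forall_apply_eq_pow g hn
  obtain ⟨b, hb⟩ := exists_forall_apply_eq_pow h hn
  rw [ha x hx, hb x hx, map_pow, map_pow, ha x hx, hb x hx, pow_right_comm]

lemma pow_div_apply_mem_bot [Normal K Ω] {n : ℕ} (hn : (n : K) ≠ 0) {x : Ω} (hx0 : x ≠ 0)
    (hx : x ∈ abelianPart K Ω) {a : K} (ha : x ^ n = algebraMap K Ω a) {τ : Gal(Ω/K)} {t : ℕ}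
    (hτ : ∀ η : Ω, η ^ n = 1 → τ η = η ^ t) :
    x ^ t / τ x ∈ (⊥ : IntermediateField K Ω) := by
  have hτx0 : τ x ≠ 0 := (map_ne_zero τ).2 hx0
  have hpow : (x ^ t / τ x) ^ n = algebraMap K Ω (a ^ t / a) := by
    rw [div_pow, pow_right_comm, ← map_pow, ha, AlgEquiv.commutes, map_div₀, map_pow]
  refine mem_of_forall_mem_fixingSubgroup
    (isSeparable_of_pow_eq_algebraMap hn (div_ne_zero (pow_ne_zero t hx0) hτx0) hpow) fun g _ => ?_
  obtain ⟨c, hc⟩ : ∃ c, g x = c * x := ⟨g x / x, (div_mul_cancel₀ _ hx0).symm⟩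
  have hcn : c ^ n = 1 := by
    have h := congr_arg g ha
    rw [map_pow, hc, mul_pow, AlgEquiv.commutes, ← ha] at h
    exact mul_eq_right₀ (pow_ne_zero n hx0) |>.1 h
  have hc0 : c ≠ 0 := left_ne_zero_of_mul (hc ▸ (map_ne_zero g).2 hx0)
  calc g (x ^ t / τ x) = g x ^ t / τ (g x) := by
        rw [map_div₀, map_pow, mem_abelianPart_iff.1 hx]
    _ = c ^ t * x ^ t / (c ^ t * τ x) := by rw [hc, mul_pow, map_mul, hτ c hcn]
    _ = x ^ t / τ x := mul_div_mul_left _ _ (pow_ne_zero t hc0)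

end AbelianPart

section LinearAlgebra

variable {F V : Type*} [Field F] [AddCommGroup V] [Module F V]

lemma mem_span_setOf_apply_eq_of_forall_apply_eq {H : Set (V →ₗ[F] V)} {R : Set V}
    (hR : ∀ f ∈ H, ∀ r ∈ R, ∃ c : F, f r = c • r) {y : V} (hy : y ∈ Submodule.span F R)
    (hfix : ∀ f ∈ H, f y = y) : y ∈ Submodule.span F {r ∈ R | ∀ f ∈ H, f r = r} := by
  obtain ⟨B, hBR, hspan, hli⟩ := exists_linearIndependent F R
  rw [← hspan, Finsupp.mem_span_iff_linearCombination] at hy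
  obtain ⟨c, rfl⟩ := hy
  rw [Finsupp.linearCombination_apply]
  refine Submodule.sum_mem _ fun b hb => Submodule.smul_mem _ _ (Submodule.subset_span ?_)
  refine ⟨hBR b.2, fun f hf => ?_⟩
  choose χ hχ using fun b : B => hR f hf b (hBR b.2)
  have hsum : ∑ b ∈ c.support, (c b * (χ b - 1)) • (b : V) = 0 := by
    have hfc := hfix f hf
    rw [Finsupp.linearCombination_apply, Finsupp.sum, map_sum, ← sub_eq_zero,
      ← Finset.sum_sub_distrib] at hfc
    rw [← hfc]
    refine Finset.sum_congr rfl fun b _ => ?_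
    rw [map_smul, hχ, smul_smul, mul_sub, mul_one, sub_smul]
  have hχb := linearIndependent_iff'.1 hli _ _ hsum b hb
  rw [hχ b, sub_eq_zero.1 ((mul_eq_zero.1 hχb).resolve_left (Finsupp.mem_support_iff.1 hb)),
    one_smul]

end LinearAlgebra

section RootsOfUnity

lemma mem_of_pow_mem_of_coprime {G : Type*} [Group G] {H : Subgroup G} {x : G} {a b : ℕ}
    (hab : a.Coprime b) (ha : x ^ a ∈ H) (hb : x ^ b ∈ H) : x ∈ H := by
  have hbezout : x = (x ^ a) ^ a.gcdA b * (x ^ b) ^ a.gcdB b := by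
    rw [← zpow_natCast, ← zpow_natCast, ← zpow_mul, ← zpow_mul, ← zpow_add,
      ← Nat.gcd_eq_gcd_ab, hab, Nat.cast_one, zpow_one]
  rw [hbezout]
  exact mul_mem (zpow_mem ha _) (zpow_mem hb _)

lemma isPrimitiveRoot_of_pow_prime_pow {M : Type*} [CommMonoid M] {p : ℕ} [Fact p.Prime] {x : M}
    {k m : ℕ} (hx : IsPrimitiveRoot (x ^ p ^ k) (p ^ (m + 1))) :
    IsPrimitiveRoot x (p ^ (m + k + 1)) := by
  have hne : ¬ x ^ p ^ (m + k) = 1 := by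
    rw [add_comm, pow_add, pow_mul]
    exact hx.pow_ne_one_of_pos_of_lt (by simp [(Fact.out : p.Prime).ne_zero])
      (Nat.pow_lt_pow_right (Fact.out : p.Prime).one_lt m.lt_succ_self)
  have heq : x ^ p ^ (m + k + 1) = 1 := by
    rw [add_right_comm, add_comm, pow_add, pow_mul, hx.pow_eq_one]
  exact orderOf_eq_prime_pow hne heq ▸ IsPrimitiveRoot.orderOf x

lemma exists_isPrimitiveRoot_algebraicClosure {K : Type*} [Field K] {n : ℕ} (hn : (n : K) ≠ 0) :
    ∃ ζ : AlgebraicClosure K, IsPrimitiveRoot ζ n := by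
  have : NeZero (n : K) := ⟨hn⟩
  have : NeZero (n : AlgebraicClosure K) :=
    NeZero.nat_of_injective (algebraMap K (AlgebraicClosure K)).injective
  exact HasEnoughRootsOfUnity.exists_primitiveRoot (AlgebraicClosure K) n

lemma exists_apply_eq_pow_mod_four_eq_three {K Ω : Type*} [Field K] [Field Ω] [Algebra K Ω]
    [Normal K Ω] (h4 : ¬ ∃ z : K, IsPrimitiveRoot z 4) {i : Ω} (hi : IsPrimitiveRoot i 4) {n : ℕ}
    (hn : n ≠ 0) (hn4 : 4 ∣ n) :
    ∃ τ : Gal(Ω/K), ∃ t : ℕ, t % 4 = 3 ∧ ∀ η : Ω, η ^ n = 1 → τ η = η ^ t := by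
  have h4K : ((4 : ℕ) : K) ≠ 0 := by
    have : NeZero ((4 : ℕ) : Ω) := hi.neZero'
    exact (NeZero.nat_of_neZero (algebraMap K Ω)).out
  have hsep : IsSeparable K i :=
    isSeparable_of_pow_eq_algebraMap h4K (hi.ne_zero four_ne_zero)
      (hi.pow_eq_one.trans (map_one _).symm)
  obtain ⟨τ, hτ⟩ : ∃ τ : Gal(Ω/K), τ i ≠ i := by
    by_contra! hfix
    obtain ⟨z, rfl⟩ : i ∈ (⊥ : IntermediateField K Ω) :=
      mem_of_forall_mem_fixingSubgroup hsep fun g _ => hfix g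
    exact h4 ⟨z, hi.of_map_of_injective (algebraMap K Ω).injective⟩
  obtain ⟨t, ht⟩ := exists_forall_apply_eq_pow τ hn
  have hτi : τ i = i ^ t := ht i ((hi.pow_eq_one_iff_dvd n).2 hn4)
  have hodd : t.Coprime 4 :=
    (hi.pow_iff_coprime four_pos t).1 (hτi ▸ hi.map_of_injective τ.injective)
  have hne1 : t % 4 ≠ 1 := fun h1 => hτ <| by
    rw [hτi, pow_eq_pow_mod t hi.pow_eq_one, h1, pow_one]
  have hodd2 : Odd t := Nat.coprime_two_right.1 (hodd.coprime_dvd_right (by norm_num))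
  exact ⟨τ, t, by grind, ht⟩

end RootsOfUnity

section Radicals

variable {K : Type*} [Field K]

lemma mem_baseUnits_iff {u : (AlgebraicClosure K)ˣ} :
    u ∈ baseUnits K ↔
      (u : AlgebraicClosure K) ∈ (⊥ : IntermediateField K (AlgebraicClosure K)) := by
  rw [IntermediateField.mem_bot]
  refine ⟨fun ⟨a, ha⟩ => ⟨a, ha ▸ rfl⟩, fun ⟨a, ha⟩ => ?_⟩
  have ha0 : a ≠ 0 := by
    rintro rfl
    exact u.ne_zero (ha.symm.trans (map_zero _))
  exact ⟨Units.mk0 a ha0, Units.ext ha⟩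

lemma mem_radGroup_iff {m : ℕ} {u : (AlgebraicClosure K)ˣ} :
    u ∈ radGroup K m ↔ u ^ m ∈ baseUnits K := by
  rw [mem_baseUnits_iff, Units.val_pow_eq_pow_val]
  exact Iff.rfl

lemma baseUnits_le_radGroup (m : ℕ) : baseUnits K ≤ radGroup K m :=
  fun _ hu => mem_radGroup_iff.2 (pow_mem hu m)

lemma exists_mem_primaryComponent_apply_eq_mul {ℓ : ℕ} {x : (AlgebraicClosure K)ˣ}
    (hx : x ∈ radInf K ℓ) (g : Gal(AlgebraicClosure K/K)) :
    ∃ z ∈ CommGroup.primaryComponent (AlgebraicClosure K)ˣ ℓ,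
      g x = z * (x : AlgebraicClosure K) := by
  obtain ⟨n, a, ha⟩ := hx
  have hgx : Units.map (g : AlgebraicClosure K →* AlgebraicClosure K) x ^ ℓ ^ n = x ^ ℓ ^ n := by
    ext
    simp [← map_pow, ← ha]
  refine ⟨Units.map (g : AlgebraicClosure K →* AlgebraicClosure K) x * x⁻¹, ⟨n, ?_⟩, by simp⟩
  rw [mul_pow, hgx, inv_pow, mul_inv_cancel]

lemma mem_primaryComponent_sup_radGroup_of_pow_mem {ℓ : ℕ} (hℓ : 0 < ℓ)
    {x : (AlgebraicClosure K)ˣ}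
    (hx : x ^ ℓ ∈ CommGroup.primaryComponent (AlgebraicClosure K)ˣ ℓ ⊔ baseUnits K) :
    x ∈ CommGroup.primaryComponent (AlgebraicClosure K)ˣ ℓ ⊔ radGroup K ℓ := by
  obtain ⟨ζ, ⟨m, hζ⟩, c, hc, hζc⟩ := Subgroup.mem_sup.1 hx
  obtain ⟨ξ, hξ⟩ : ∃ ξ : (AlgebraicClosure K)ˣ, ξ ^ ℓ = ζ := by
    obtain ⟨ξ, hξ⟩ := IsAlgClosed.exists_pow_nat_eq (ζ : AlgebraicClosure K) hℓ
    have hξ0 : ξ ≠ 0 := by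
      rintro rfl
      exact ζ.ne_zero (hξ ▸ zero_pow hℓ.ne')
    exact ⟨Units.mk0 ξ hξ0, Units.ext hξ⟩
  have hξμ : ξ ∈ CommGroup.primaryComponent (AlgebraicClosure K)ˣ ℓ :=
    ⟨m + 1, by rw [pow_succ', pow_mul, hξ, hζ]⟩
  have hw : ξ⁻¹ * x ∈ radGroup K ℓ := by
    rwa [mem_radGroup_iff, mul_pow, inv_pow, hξ, ← hζc, inv_mul_cancel_left]
  exact mul_inv_cancel_left ξ x ▸ Subgroup.mul_mem_sup hξμ hw

lemma mem_primaryComponent_sup_radGroup_of_mem_abelianPart (h2 : (2 : K) ≠ 0)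
    (h4 : ¬ ∃ z : K, IsPrimitiveRoot z 4) {x : (AlgebraicClosure K)ˣ} (hx : x ∈ radInf K 2)
    (hxab : (x : AlgebraicClosure K) ∈ abelianPart K (AlgebraicClosure K)) :
    x ∈ CommGroup.primaryComponent (AlgebraicClosure K)ˣ 2 ⊔ radGroup K 2 := by
  obtain ⟨k, hk⟩ := hx
  obtain ⟨a, ha⟩ : x ∈ radGroup K (2 ^ k * 4) := radGroup_le K hk
  have hn : ((2 ^ k * 4 : ℕ) : K) ≠ 0 := by
    rw [show 2 ^ k * 4 = 2 ^ (k + 2) by ring, Nat.cast_pow]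
    exact pow_ne_zero _ h2
  obtain ⟨i, hi⟩ := exists_isPrimitiveRoot_algebraicClosure (K := K) (n := 4)
    (right_ne_zero_of_mul (Nat.cast_mul (α := K) _ 4 ▸ hn))
  obtain ⟨τ, t, ht, hτ⟩ :=
    exists_apply_eq_pow_mod_four_eq_three h4 hi (by positivity) (dvd_mul_left 4 (2 ^ k))
  obtain ⟨b, hb⟩ := pow_div_apply_mem_bot hn x.ne_zero hxab ha.symm hτ
  obtain ⟨z, hz, hzx⟩ := exists_mem_primaryComponent_apply_eq_mul ⟨k, hk⟩ τ
  obtain ⟨u, rfl⟩ : ∃ u, t = 2 * (2 * u + 1) + 1 := ⟨t / 4, by omega⟩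
  have hzK : z⁻¹ * (x ^ (2 * u + 1)) ^ 2 ∈ baseUnits K := by
    rw [mem_baseUnits_iff]
    refine ⟨b, hb.trans ?_⟩
    rw [hzx]
    push_cast
    field_simp
    ring
  have hodd : x ^ (2 * u + 1) ∈ CommGroup.primaryComponent (AlgebraicClosure K)ˣ 2 ⊔ radGroup K 2 :=
    mem_primaryComponent_sup_radGroup_of_pow_mem two_pos
      (mul_inv_cancel_left z ((x ^ (2 * u + 1)) ^ 2) ▸ Subgroup.mul_mem_sup hz hzK)
  have htwo : x ^ 2 ^ k ∈ CommGroup.primaryComponent (AlgebraicClosure K)ˣ 2 ⊔ radGroup K 2 :=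
    Subgroup.mem_sup_right (baseUnits_le_radGroup 2 (mem_radGroup_iff.1 hk))
  exact mem_of_pow_mem_of_coprime (Nat.Coprime.pow_right k (by simp)) hodd htwo

end Radicals

section PrimePowerRootsOfUnity

variable {K : Type*} [Field K] {ℓ : ℕ}

lemma pPowRoots_mono {t t' : ℕ∞} (h : t ≤ t') : pPowRoots K ℓ t ⊆ pPowRoots K ℓ t' :=
  fun _ ⟨n, hn, hx⟩ => ⟨n, hn.trans h, hx⟩

lemma mem_pPowRoots_natCast_iff [Fact ℓ.Prime] {n : ℕ} {x : AlgebraicClosure K} :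
    x ∈ pPowRoots K ℓ n ↔ x ^ ℓ ^ n = 1 := by
  refine ⟨fun ⟨m, hm, hx⟩ => ?_, fun hx => ?_⟩
  · exact (hx.pow_eq_one_iff_dvd _).2 (pow_dvd_pow ℓ (Nat.cast_le.1 hm))
  · obtain ⟨m, hm, hord⟩ := (Nat.dvd_prime_pow Fact.out).1 (orderOf_dvd_of_pow_eq_one hx)
    exact ⟨m, Nat.cast_le.2 hm, hord ▸ IsPrimitiveRoot.orderOf x⟩

lemma val_mem_pPowRoots_top_iff [Fact ℓ.Prime] {u : (AlgebraicClosure K)ˣ} :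
    (u : AlgebraicClosure K) ∈ pPowRoots K ℓ ⊤ ↔
      u ∈ CommGroup.primaryComponent (AlgebraicClosure K)ˣ ℓ := by
  rw [CommGroup.mem_primaryComponent_iff_orderOf]
  refine ⟨fun ⟨n, _, hu⟩ => ⟨n, ?_⟩, fun ⟨n, hn⟩ => ⟨n, le_top, ?_⟩⟩
  · rw [← orderOf_units, hu.eq_orderOf]
  · rw [← hn, ← orderOf_units]
    exact IsPrimitiveRoot.orderOf _

end PrimePowerRootsOfUnity

section SqrtCyclotomicField

/-- The field `K(ζ_{2^t}, √{K^×})`, where `t = ⊤` means adjoining all roots of unity of `2`-power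
order. -/
def sqrtCyclotomicField (K : Type*) [Field K] (t : ℕ∞) : IntermediateField K (AlgebraicClosure K) :=
  adjoin K (pPowRoots K 2 t ∪ Units.val '' (radGroup K 2 : Set (AlgebraicClosure K)ˣ))

variable {K : Type*} [Field K]

lemma sqrtCyclotomicField_mono {t t' : ℕ∞} (h : t ≤ t') :
    sqrtCyclotomicField K t ≤ sqrtCyclotomicField K t' :=
  adjoin.mono _ _ _ (Set.union_subset_union_left _ (pPowRoots_mono h))

lemma pPowRoots_subset_sqrtCyclotomicField (t : ℕ∞) :
    pPowRoots K 2 t ⊆ sqrtCyclotomicField K t :=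
  fun _ hx => subset_adjoin _ _ (Or.inl hx)

lemma radGroup_le_unitsIn_sqrtCyclotomicField (t : ℕ∞) :
    radGroup K 2 ≤ unitsIn (sqrtCyclotomicField K t) :=
  fun _ hx => subset_adjoin _ _ (Or.inr (Set.mem_image_of_mem _ hx))

lemma exists_mem_sqrtCyclotomicField_natCast {y : AlgebraicClosure K}
    (hy : y ∈ sqrtCyclotomicField K ⊤) : ∃ n : ℕ, y ∈ sqrtCyclotomicField K n := by
  have hmono : Monotone fun n : ℕ => sqrtCyclotomicField K n :=
    fun _ _ h => sqrtCyclotomicField_mono (Nat.cast_le.2 h)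
  have hle : sqrtCyclotomicField K ⊤ ≤ ⨆ n : ℕ, sqrtCyclotomicField K n := by
    refine adjoin_le_iff.2 (Set.union_subset ?_ ?_)
    · rintro x ⟨n, -, hx⟩
      exact le_iSup (fun n : ℕ => sqrtCyclotomicField K n) n
        (pPowRoots_subset_sqrtCyclotomicField n ⟨n, le_rfl, hx⟩)
    · rintro _ ⟨u, hu, rfl⟩
      exact le_iSup (fun n : ℕ => sqrtCyclotomicField K n) 0
        (radGroup_le_unitsIn_sqrtCyclotomicField _ hu)
  have hmem := hle hy
  rwa [← SetLike.mem_coe, coe_iSup_of_directed hmono.directed_le, Set.mem_iUnion] at hmem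

lemma isSeparable_of_mem_sqrtCyclotomicField (h2 : (2 : K) ≠ 0) {t : ℕ∞} {y : AlgebraicClosure K}
    (hy : y ∈ sqrtCyclotomicField K t) : IsSeparable K y := by
  suffices hle : sqrtCyclotomicField K t ≤ separableClosure K (AlgebraicClosure K) from
    mem_separableClosure_iff.1 (hle hy)
  refine adjoin_le_iff.2 (Set.union_subset ?_ ?_)
  · rintro x ⟨n, -, hx⟩
    exact mem_separableClosure_iff.2 <| isSeparable_of_pow_eq_algebraMap (n := 2 ^ n) (a := 1)
      (by simpa using pow_ne_zero n h2) (hx.ne_zero (by simp)) (by simp [hx.pow_eq_one])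
  · rintro _ ⟨u, ⟨a, ha⟩, rfl⟩
    exact mem_separableClosure_iff.2 <| isSeparable_of_pow_eq_algebraMap
      (by exact_mod_cast h2) u.ne_zero ha.symm

lemma sqrtCyclotomicField_succ_le {n : ℕ} {w : AlgebraicClosure K}
    (hw : IsPrimitiveRoot w (2 ^ (n + 1))) :
    sqrtCyclotomicField K (n + 1 : ℕ) ≤ sqrtCyclotomicField K n ⊔ K⟮w⟯ := by
  refine adjoin_le_iff.2 (Set.union_subset ?_ ?_)
  · intro x hx
    obtain ⟨j, -, rfl⟩ := hw.eq_pow_of_pow_eq_one (mem_pPowRoots_natCast_iff.1 hx)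
    exact pow_mem (le_sup_right (α := IntermediateField K _) (mem_adjoin_simple_self K w)) j
  · rintro _ ⟨u, hu, rfl⟩
    exact le_sup_left (α := IntermediateField K _) (radGroup_le_unitsIn_sqrtCyclotomicField _ hu)

end SqrtCyclotomicField

section AbelianRadicals

variable {K : Type*} [Field K]

lemma mem_span_of_mem_adjoin_val_image {Ω : Type*} [Field Ω] [Algebra K Ω] [Algebra.IsAlgebraic K Ω]
    (F : IntermediateField K Ω) {R : Subgroup Ωˣ} {y : Ω}
    (hy : y ∈ adjoin K (Units.val '' (R : Set Ωˣ))) :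
    y ∈ Submodule.span F (Units.val '' (R : Set Ωˣ)) := by
  have hclosure : (Submonoid.closure (Units.val '' (R : Set Ωˣ)) : Set Ω) = Units.val '' R :=
    congr_arg SetLike.coe (Submonoid.closure_eq (R.toSubmonoid.map (Units.coeHom Ω)))
  rw [← mem_toSubalgebra, adjoin_toSubalgebra_of_isAlgebraic
    fun x _ => Algebra.IsAlgebraic.isAlgebraic x, ← Subalgebra.mem_toSubmodule,
    Algebra.adjoin_eq_span, hclosure] at hy
  exact Submodule.span_le_restrictScalars K F _ hy

lemma mem_of_mem_span_of_subset {Ω : Type*} [Field Ω] [Algebra K Ω] {F E : IntermediateField K Ω}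
    (hFE : F ≤ E) {R : Set Ω} (hR : R ⊆ E) {y : Ω} (hy : y ∈ Submodule.span F R) : y ∈ E :=
  Submodule.span_le (p := (extendScalars hFE).toSubalgebra.toSubmodule).2 hR hy

lemma abelianPart_inf_adjoin_radInf_le (h2 : (2 : K) ≠ 0) (h4 : ¬ ∃ z : K, IsPrimitiveRoot z 4) :
    abelianPart K (AlgebraicClosure K) ⊓
        adjoin K (Units.val '' (radInf K 2 : Set (AlgebraicClosure K)ˣ)) ≤
      sqrtCyclotomicField K ⊤ := by
  rintro y ⟨hyab, hy⟩
  set F := adjoin K (pPowRoots K 2 ⊤)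
  have hFab : F ≤ abelianPart K (AlgebraicClosure K) := adjoin_le_iff.2 fun _ ⟨_, _, hx⟩ =>
    mem_abelianPart_of_pow_eq_one (by simp) hx.pow_eq_one
  have hFE : F ≤ sqrtCyclotomicField K ⊤ := adjoin.mono _ _ _ Set.subset_union_left
  let H : Set (AlgebraicClosure K →ₗ[F] AlgebraicClosure K) :=
    {f | ∃ g ∈ commutator Gal(AlgebraicClosure K/K), ∀ x, f x = g x}
  have hspan := mem_span_setOf_apply_eq_of_forall_apply_eq (H := H) ?eigen
    (mem_span_of_mem_adjoin_val_image F hy)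
    fun f ⟨g, hg, hfg⟩ => (hfg y).trans ((mem_fixedField_iff _ _).1 hyab g hg)
  case eigen =>
    rintro f ⟨g, -, hfg⟩ _ ⟨x, hx, rfl⟩
    obtain ⟨z, hz, hzx⟩ := exists_mem_primaryComponent_apply_eq_mul hx g
    exact ⟨⟨z, subset_adjoin _ _ (val_mem_pPowRoots_top_iff.2 hz)⟩, (hfg x).trans hzx⟩
  have hfixed : {r ∈ Units.val '' (radInf K 2 : Set (AlgebraicClosure K)ˣ) | ∀ f ∈ H, f r = r} ⊆
      sqrtCyclotomicField K ⊤ := by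
    rintro _ ⟨⟨x, hx, rfl⟩, hfix⟩
    have hxab : (x : AlgebraicClosure K) ∈ abelianPart K (AlgebraicClosure K) := by
      refine (mem_fixedField_iff _ _).2 fun g hg => ?_
      exact hfix (fixingSubgroupEquiv F ⟨g, (le_iff_le _ _).1 hFab hg⟩).toLinearMap
        ⟨g, hg, fun _ => rfl⟩
    obtain ⟨ξ, hξ, w, hw, rfl⟩ := Subgroup.mem_sup.1
      (mem_primaryComponent_sup_radGroup_of_mem_abelianPart h2 h4 hx hxab)
    exact mul_mem (pPowRoots_subset_sqrtCyclotomicField ⊤ (val_mem_pPowRoots_top_iff.2 hξ))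
      (radGroup_le_unitsIn_sqrtCyclotomicField ⊤ hw)
  exact mem_of_mem_span_of_subset hFE hfixed hspan

end AbelianRadicals

section QuadraticDescent

variable {K Ω : Type*} [Field K] [Field Ω] [Algebra K Ω]

lemma mem_of_mem_sup_adjoin_simple_of_apply_eq [Normal K Ω] {E : IntermediateField K Ω} {w y : Ω}
    {τ : Gal(Ω/K)} (hτ : τ ∈ E.fixingSubgroup) (hτw : τ w = -w) (hw : w ^ 2 ∈ E)
    (hsep : IsSeparable K y) (hy : y ∈ E ⊔ K⟮w⟯) (hτy : τ y = y) : y ∈ E := by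
  refine mem_of_forall_mem_fixingSubgroup hsep fun g hg => ?_
  have hfix {φ : Gal(Ω/K)} (hφ : φ ∈ E.fixingSubgroup) (hφw : φ w = w) : φ y = y := by
    have hle : E ⊔ K⟮w⟯ ≤ FixedBy.intermediateField K Ω φ :=
      sup_le ((E.mem_fixingSubgroup_iff φ).1 hφ) (adjoin_simple_le_iff.2 hφw)
    exact hle hy
  have hsq : g w ^ 2 = w ^ 2 := by
    rw [← map_pow, (E.mem_fixingSubgroup_iff g).1 hg _ hw]
  rcases sq_eq_sq_iff_eq_or_eq_neg.1 hsq with hgw | hgw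
  · exact hfix hg hgw
  · have hgτ : (g * τ) y = y := hfix (mul_mem hg hτ) <| by
      rw [AlgEquiv.mul_apply, hτw, map_neg, hgw, neg_neg]
    rwa [AlgEquiv.mul_apply, hτy] at hgτ

lemma pow_two_pow_apply_eq_neg {σ : Gal(Ω/K)} (hσ : ∀ ε : Ω, ε ^ 2 = -1 → σ ε = ε) {ζ : Ω}
    (hσζ : σ ζ = -ζ) {d : ℕ} {w : Ω} (hw : w ^ 2 ^ d = ζ) : (σ ^ 2 ^ d) w = -w := by
  induction d generalizing w with
  | zero => simpa [← hw] using hσζ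
  | succ d ih =>
    obtain rfl | hw0 := eq_or_ne w 0
    · simp
    have hsq : (σ ^ 2 ^ d) w ^ 2 = -w ^ 2 := by
      rw [← map_pow]
      exact ih (by rw [← pow_mul, ← pow_succ', hw])
    set ε := (σ ^ 2 ^ d) w / w with hε
    have hε2 : ε ^ 2 = -1 := by rw [hε, div_pow, hsq, neg_div, div_self (pow_ne_zero 2 hw0)]
    have hεw : (σ ^ 2 ^ d) w = ε * w := (div_mul_cancel₀ _ hw0).symm
    have hσε : (σ ^ 2 ^ d) ε = ε :=
      pow_mem (S := MulAction.stabilizer Gal(Ω/K) ε) (hσ ε hε2) _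
    rw [pow_succ, pow_mul, sq, AlgEquiv.mul_apply, hεw, map_mul, hσε, hεw, ← mul_assoc, ← sq, hε2,
      neg_one_mul]

end QuadraticDescent

section Descent

variable {K : Type*} [Field K]

lemma sq_apply_eq_of_mem_radGroup (σ : Gal(AlgebraicClosure K/K)) {u : (AlgebraicClosure K)ˣ}
    (hu : u ∈ radGroup K 2) : (σ ^ 2) (u : AlgebraicClosure K) = u := by
  obtain ⟨a, ha⟩ := hu
  have hsq : σ u ^ 2 = (u : AlgebraicClosure K) ^ 2 := by rw [← map_pow, ← ha, AlgEquiv.commutes]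
  rw [sq, AlgEquiv.mul_apply]
  rcases sq_eq_sq_iff_eq_or_eq_neg.1 hsq with h | h <;> simp [h]

lemma mem_sqrtCyclotomicField_of_mem_succ (h2 : (2 : K) ≠ 0) {n : ℕ} {w : AlgebraicClosure K}
    (hw : IsPrimitiveRoot w (2 ^ (n + 1))) {τ : Gal(AlgebraicClosure K/K)} (hτw : τ w = -w)
    (hτ : ∀ u ∈ radGroup K 2, τ u = u) {y : AlgebraicClosure K}
    (hy : y ∈ sqrtCyclotomicField K (n + 1 : ℕ)) (hτy : τ y = y) :
    y ∈ sqrtCyclotomicField K n := by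
  have hw2 : IsPrimitiveRoot (w ^ 2) (2 ^ n) := hw.pow (by simp) (pow_succ' 2 n)
  have hτE : τ ∈ (sqrtCyclotomicField K n).fixingSubgroup := by
    refine (mem_fixingSubgroup_iff _ _).2 ((forall_mem_adjoin_smul_eq_self_iff K τ).2 ?_)
    rintro _ (hx | ⟨u, hu, rfl⟩)
    · obtain ⟨j, -, rfl⟩ := hw2.eq_pow_of_pow_eq_one (mem_pPowRoots_natCast_iff.1 hx)
      rw [AlgEquiv.smul_def, map_pow, map_pow, hτw, neg_sq]
    · exact hτ u hu
  exact mem_of_mem_sup_adjoin_simple_of_apply_eq hτE hτw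
    (pPowRoots_subset_sqrtCyclotomicField n ⟨n, le_rfl, hw2⟩)
    (isSeparable_of_mem_sqrtCyclotomicField h2 hy) (sqrtCyclotomicField_succ_le hw hy) hτy

lemma inf_sqrtCyclotomicField_top_le (h2 : (2 : K) ≠ 0)
    {L : IntermediateField K (AlgebraicClosure K)}
    (hi : ∀ ε : AlgebraicClosure K, ε ^ 2 = -1 → ε ∈ L) {m : ℕ} {ζ : AlgebraicClosure K}
    (hζ : IsPrimitiveRoot ζ (2 ^ (m + 1))) {σ : Gal(AlgebraicClosure K/K)}
    (hσ : σ ∈ L.fixingSubgroup) (hσζ : σ ζ = -ζ) :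
    L ⊓ sqrtCyclotomicField K ⊤ ≤ sqrtCyclotomicField K (m + 1 : ℕ) := by
  suffices hdesc : ∀ d : ℕ, L ⊓ sqrtCyclotomicField K (m + d + 1 : ℕ) ≤
      sqrtCyclotomicField K (m + 1 : ℕ) by
    rintro y ⟨hyL, hy⟩
    obtain ⟨n, hn⟩ := exists_mem_sqrtCyclotomicField_natCast hy
    exact hdesc n ⟨hyL, sqrtCyclotomicField_mono (Nat.cast_le.2 (by lia)) hn⟩
  intro d
  induction d with
  | zero => exact inf_le_right
  | succ d ih =>
    rintro y ⟨hyL, hy⟩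
    obtain ⟨w, rfl⟩ := IsAlgClosed.exists_pow_nat_eq ζ (n := 2 ^ (d + 1)) (by positivity)
    have hLfix {k : ℕ} {x : AlgebraicClosure K} (hx : x ∈ L) : (σ ^ k) x = x :=
      (L.mem_fixingSubgroup_iff _).1 (pow_mem hσ k) x hx
    have hτw : (σ ^ 2 ^ (d + 1)) w = -w :=
      pow_two_pow_apply_eq_neg (fun ε hε => (L.mem_fixingSubgroup_iff σ).1 hσ ε (hi ε hε)) hσζ rfl
    have hτrad (u) (hu : u ∈ radGroup K 2) : (σ ^ 2 ^ (d + 1)) u = (u : AlgebraicClosure K) := by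
      rw [pow_succ, pow_mul]
      exact sq_apply_eq_of_mem_radGroup _ hu
    exact ih ⟨hyL, mem_sqrtCyclotomicField_of_mem_succ h2 (isPrimitiveRoot_of_pow_prime_pow hζ)
      hτw hτrad hy (hLfix hyL)⟩

end Descent

section CyclotomicIntersections

variable {K : Type*} [Field K]

lemma mem_closure_pPowRootsUnits_sup_radGroup
    {L : IntermediateField K (AlgebraicClosure K)} {s : ℕ∞}
    (hsmax : ∀ n : ℕ, s < n → ∀ x : AlgebraicClosure K, IsPrimitiveRoot x (2 ^ n) → x ∉ L)
    {x : (AlgebraicClosure K)ˣ} (hxL : x ∈ unitsIn L)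
    (hx : x ∈ CommGroup.primaryComponent (AlgebraicClosure K)ˣ 2 ⊔ radGroup K 2) :
    x ∈ Subgroup.closure (pPowRootsUnits K 2 (s + 1)) ⊔ radGroup K 2 := by
  obtain ⟨ξ, hξ, w, ⟨a, ha⟩, rfl⟩ := Subgroup.mem_sup.1 hx
  obtain ⟨m, -, hm⟩ := val_mem_pPowRoots_top_iff.2 hξ
  refine Subgroup.mul_mem_sup (Subgroup.subset_closure ⟨m, ?_, hm⟩) ⟨a, ha⟩
  obtain _ | m := m
  · simp
  have hξL : (ξ : AlgebraicClosure K) ^ 2 ∈ L := by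
    have hξw : (ξ : AlgebraicClosure K) ^ 2 =
        (ξ * w : (AlgebraicClosure K)ˣ) ^ 2 / algebraMap K (AlgebraicClosure K) a := by
      rw [ha, Units.val_mul, mul_pow, mul_div_cancel_right₀ _ (pow_ne_zero 2 w.ne_zero)]
    exact hξw ▸ div_mem (pow_mem hxL 2) (L.algebraMap_mem a)
  have hms : (m : ℕ∞) ≤ s := not_lt.1 fun hlt =>
    hsmax m hlt _ (hm.pow (by simp) (pow_succ' 2 m)) hξL
  exact_mod_cast add_le_add_left hms 1

lemma cyclo2P_le_abelianPart : cyclo2P K ≤ abelianPart K (AlgebraicClosure K) := by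
  refine adjoin_le_iff.2 fun x ⟨n, _, hchar, hx⟩ => mem_abelianPart_of_pow_eq_one ?_ hx.pow_eq_one
  rintro rfl
  exact hchar (dvd_zero _)

lemma mem_cyclo2P_of_sq_eq_neg_one (hchar : ringChar K ≠ 2) {ε : AlgebraicClosure K}
    (hε : ε ^ 2 = -1) : ε ∈ cyclo2P K := by
  have : CharP (AlgebraicClosure K) (ringChar K) :=
    charP_of_injective_algebraMap (algebraMap K (AlgebraicClosure K)).injective _
  have hε4 : IsPrimitiveRoot ε (2 ^ (0 + 1 + 1)) := by
    refine isPrimitiveRoot_of_pow_prime_pow (p := 2) (k := 1) (m := 0) ?_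
    simpa [hε] using IsPrimitiveRoot.neg_one (ringChar K) hchar
  refine subset_adjoin _ _ ⟨4, Or.inl rfl, fun hdvd => ?_, hε4⟩
  have h22 : (2 * 2 : K) = 0 := by exact_mod_cast (ringChar.spec K 4).2 hdvd
  exact mul_self_ne_zero.2 (Ring.two_ne_zero hchar) h22

theorem stmt19_general (h2 : (2 : K) ≠ 0) (h4 : ¬ ∃ z : K, IsPrimitiveRoot z 4)
    {L : IntermediateField K (AlgebraicClosure K)} (hL : L ≤ abelianPart K (AlgebraicClosure K))
    (hi : ∀ ε : AlgebraicClosure K, ε ^ 2 = -1 → ε ∈ L) {s : ℕ∞}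
    (hsin : ∀ n : ℕ, n ≤ s → ∀ x : AlgebraicClosure K, IsPrimitiveRoot x (2 ^ n) → x ∈ L)
    (hsmax : ∀ n : ℕ, s < n → ∀ x : AlgebraicClosure K, IsPrimitiveRoot x (2 ^ n) → x ∉ L) :
    unitsIn L ⊓ radInf K 2 ≤
      Subgroup.closure (pPowRootsUnits K 2 (s + 1)) ⊔ radGroup K 2 ∧
    L ⊓ adjoin K (Units.val '' (radInf K 2 : Set (AlgebraicClosure K)ˣ)) ≤
      adjoin K (pPowRoots K 2 (s + 1) ∪
        Units.val '' (radGroup K 2 : Set (AlgebraicClosure K)ˣ)) := by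
  have habel : L ⊓ adjoin K (Units.val '' (radInf K 2 : Set (AlgebraicClosure K)ˣ)) ≤
      L ⊓ sqrtCyclotomicField K ⊤ :=
    le_inf inf_le_left ((inf_le_inf_right _ hL).trans (abelianPart_inf_adjoin_radInf_le h2 h4))
  refine ⟨fun x ⟨hxL, hx⟩ => mem_closure_pPowRootsUnits_sup_radGroup hsmax hxL
    (mem_primaryComponent_sup_radGroup_of_mem_abelianPart h2 h4 hx (hL hxL)), habel.trans ?_⟩
  induction s using ENat.recTopCoe with
  | top => exact inf_le_right
  | coe S =>
    obtain ⟨ζ, hζ⟩ := exists_isPrimitiveRoot_algebraicClosure (K := K) (n := 2 ^ (S + 1))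
      (by simpa using h2)
    have hζ2 : ζ ^ 2 ∈ L := hsin S le_rfl _ (hζ.pow (by simp) (pow_succ' 2 S))
    have hζL : ζ ∉ L := hsmax (S + 1) (by exact_mod_cast S.lt_succ_self) ζ hζ
    have hsep : IsSeparable K ζ := isSeparable_of_mem_sqrtCyclotomicField h2
      (pPowRoots_subset_sqrtCyclotomicField ⊤ ⟨S + 1, le_top, hζ⟩)
    obtain ⟨σ, hσ, hσζ⟩ := exists_mem_fixingSubgroup_apply_eq_neg hsep hζL hζ2
    exact_mod_cast inf_sqrtCyclotomicField_top_le h2 hi hζ hσ hσζ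

end CyclotomicIntersections

/-- Equations (6.3) and (6.4) in the proof of Theorem 1.2: let `char K ≠ 2`, `ζ₄ ∉ K`, and
let `s` be the largest element of `ℕ ∪ {∞}` such that `ζ_{2^s} ∈ K(ζ_{2𝒫})`. Then
`K(ζ_{2𝒫}) ∩ √[2^∞]{K^×} ⊆ ⟨ζ_{2^{s+1}}, √{K^×}⟩` and
`K(ζ_{2𝒫}) ∩ K(√[2^∞]{K^×}) ⊆ K(ζ_{2^{s+1}}, √{K^×})`. -/
theorem stmt19 (K : Type*) [Field K] (hchar : ringChar K ≠ 2)
    (h4 : ¬ ∃ z : K, IsPrimitiveRoot z 4)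
    (s : ℕ∞)
    (hsin : ∀ n : ℕ, (n : ℕ∞) ≤ s → ∀ x : AlgebraicClosure K,
      IsPrimitiveRoot x (2 ^ n) → x ∈ cyclo2P K)
    (hsmax : ∀ n : ℕ, s < (n : ℕ∞) → ∀ x : AlgebraicClosure K,
      IsPrimitiveRoot x (2 ^ n) → x ∉ cyclo2P K) :
    unitsIn (cyclo2P K) ⊓ radInf K 2 ≤
      Subgroup.closure (pPowRootsUnits K 2 (s + 1)) ⊔ radGroup K 2 ∧
    cyclo2P K ⊓
        IntermediateField.adjoin K (Units.val '' (radInf K 2 : Set (AlgebraicClosure K)ˣ)) ≤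
      IntermediateField.adjoin K (pPowRoots K 2 (s + 1) ∪
        Units.val '' (radGroup K 2 : Set (AlgebraicClosure K)ˣ)) := by
  exact stmt19_general (Ring.two_ne_zero hchar) h4 cyclo2P_le_abelianPart
    (fun _ => mem_cyclo2P_of_sq_eq_neg_one hchar) hsin hsmax

end
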